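/- arXiv:2511.05576 — 3 statements merged into one kernel-verified Lean document; each statement's English description precedes it below -/
import Mathlib

section
/- Let k be a field and let A = k[x_{i,j} : 1 ≤ i ≤ r, 1 ≤ j ≤ c]/I where I is generated by all 2×2 minors of the r×c matrix X = (x_{i,j}). Then the vanishing locus of the ideal (x_{i,j}) in Spec A is the unique singular point of Spec A when r, c ≥ 2, and away from this point Spec A is smooth of dimension r + c - 1. -/
open MvPolynomial

/-- The ideal of 2×2 minors. -/
noncomputable def detI (k : Type) [Field k] (r c : ℕ) : Ideal (MvPolynomial (Fin r × Fin c) k) :=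
  Ideal.span {f | ∃ (i i' : Fin r) (j j' : Fin c),
      f = X (i, j) * X (i', j') - X (i, j') * X (i', j)}

abbrev detA (k : Type) [Field k] (r c : ℕ) : Type := MvPolynomial (Fin r × Fin c) k ⧸ detI k r c

noncomputable def detx (k : Type) [Field k] {r c : ℕ} (i : Fin r) (j : Fin c) : detA k r c :=
  Ideal.Quotient.mk _ (X (i, j))

lemma detx_rel (k : Type) [Field k] {r c : ℕ} (i i' : Fin r) (j j' : Fin c) :
    detx k i j * detx k i' j' = detx k i j' * detx k i' j := by
  rw [← sub_eq_zero]
  unfold detx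
  rw [← map_mul, ← map_mul, ← map_sub, Ideal.Quotient.eq_zero_iff_mem]
  exact Ideal.subset_span ⟨i, i', j, j', rfl⟩

section chart

variable (k : Type) [Field k] {r c : ℕ} (i0 : Fin r) (j0 : Fin c)

abbrev chartB : Type := MvPolynomial ({i : Fin r // i ≠ i0} ⊕ {j : Fin c // j ≠ j0})
  (LaurentPolynomial k)

noncomputable def chartU (i : Fin r) : chartB k i0 j0 :=
  if h : i = i0 then 1 else X (Sum.inl ⟨i, h⟩)

noncomputable def chartV (j : Fin c) : chartB k i0 j0 :=
  if h : j = j0 then 1 else X (Sum.inr ⟨j, h⟩)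

noncomputable def chartT : chartB k i0 j0 := C (LaurentPolynomial.T 1)

lemma chartT_unit : IsUnit (chartT k i0 j0) :=
  (LaurentPolynomial.isUnit_T 1).map C

noncomputable def chartFwd : detA k r c →ₐ[k] chartB k i0 j0 :=
  Ideal.Quotient.liftₐ (detI k r c)
    (aeval fun p => chartT k i0 j0 * chartU k i0 j0 p.1 * chartV k i0 j0 p.2) (by
      intro a ha
      suffices h : detI k r c ≤ RingHom.ker (aeval (R := k) fun p : Fin r × Fin c =>
          chartT k i0 j0 * chartU k i0 j0 p.1 * chartV k i0 j0 p.2) from h ha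
      refine Ideal.span_le.mpr ?_
      rintro _ ⟨i, i', j, j', rfl⟩
      simp only [SetLike.mem_coe, RingHom.mem_ker, map_sub, map_mul, aeval_X]
      ring)

lemma chartFwd_x (i : Fin r) (j : Fin c) : chartFwd k i0 j0 (detx k i j) =
    chartT k i0 j0 * chartU k i0 j0 i * chartV k i0 j0 j := by
  change aeval (R := k) _ (X (i, j)) = _
  rw [aeval_X]

lemma chartFwd_x0 : chartFwd k i0 j0 (detx k i0 j0) = chartT k i0 j0 := by
  simp [chartFwd_x, chartU, chartV]

noncomputable def chartFwd' : Localization.Away (detx k i0 j0) →+* chartB k i0 j0 :=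
  IsLocalization.Away.lift (detx k i0 j0) (g := (chartFwd k i0 j0).toRingHom)
    (by simpa [chartFwd_x0] using chartT_unit k i0 j0)

lemma chartFwd'_algebraMap (a : detA k r c) :
    chartFwd' k i0 j0 (algebraMap _ _ a) = chartFwd k i0 j0 a := by
  simp [chartFwd']

noncomputable def chartInvx : Localization.Away (detx k i0 j0) :=
  IsLocalization.Away.invSelf (detx k i0 j0)

lemma chartInvx_mul : algebraMap _ (Localization.Away (detx k i0 j0)) (detx k i0 j0) *
    chartInvx k i0 j0 = 1 :=
  IsLocalization.Away.mul_invSelf _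

noncomputable def chartUnit : (Localization.Away (detx k i0 j0))ˣ :=
  Units.mkOfMulEqOne _ _ (chartInvx_mul k i0 j0)

noncomputable def chartBwd : chartB k i0 j0 →+* Localization.Away (detx k i0 j0) :=
  eval₂Hom (LaurentPolynomial.eval₂ (algebraMap k _) (chartUnit k i0 j0))
    (Sum.elim (fun i => algebraMap _ _ (detx k i.1 j0) * chartInvx k i0 j0)
      (fun j => algebraMap _ _ (detx k i0 j.1) * chartInvx k i0 j0))

lemma chartBwd_C (a : k) : chartBwd k i0 j0 (C (LaurentPolynomial.C a)) = algebraMap k _ a := by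
  simp [chartBwd]

lemma chartBwd_T : chartBwd k i0 j0 (chartT k i0 j0) = algebraMap _ _ (detx k i0 j0) := by
  simp [chartBwd, chartT, LaurentPolynomial.eval₂_T, chartUnit]

lemma chartBwd_U (i : Fin r) : chartBwd k i0 j0 (chartU k i0 j0 i) =
    algebraMap _ _ (detx k i j0) * chartInvx k i0 j0 := by
  unfold chartU
  split_ifs with h
  · subst h; rw [chartInvx_mul, map_one]
  · simp [chartBwd]

lemma chartBwd_V (j : Fin c) : chartBwd k i0 j0 (chartV k i0 j0 j) =
    algebraMap _ _ (detx k i0 j) * chartInvx k i0 j0 := by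
  unfold chartV
  split_ifs with h
  · subst h; rw [chartInvx_mul, map_one]
  · simp [chartBwd]

lemma chartFwd'_k (a : k) : chartFwd' k i0 j0 (algebraMap k _ a) = algebraMap k _ a := by
  rw [IsScalarTower.algebraMap_apply k (detA k r c), chartFwd'_algebraMap, AlgHom.commutes]

lemma algMap_chartB (a : k) : algebraMap k (chartB k i0 j0) a = C (LaurentPolynomial.C a) := by
  rfl

lemma chartFwd'_inv : chartT k i0 j0 * chartFwd' k i0 j0 (chartInvx k i0 j0) = 1 := by
  rw [← chartFwd_x0, ← chartFwd'_algebraMap, ← map_mul, chartInvx_mul, map_one]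

lemma laurent_hom_ext {S : Type*} [CommRing S] (f g : LaurentPolynomial k →+* S)
    (h : ∀ a, f (LaurentPolynomial.C a) = g (LaurentPolynomial.C a))
    (hT : f (LaurentPolynomial.T 1) = g (LaurentPolynomial.T 1)) : f = g := by
  apply IsLocalization.ringHom_ext (Submonoid.powers (Polynomial.X : Polynomial k))
  apply Polynomial.ringHom_ext
  · intro a; simpa using h a
  · simpa using hT

noncomputable def chartEquiv : Localization.Away (detx k i0 j0) ≃ₐ[k] chartB k i0 j0 :=
  AlgEquiv.ofRingEquiv (f := RingEquiv.ofRingHom (chartFwd' k i0 j0) (chartBwd k i0 j0) (by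
    apply MvPolynomial.ringHom_ext'
    · apply laurent_hom_ext
      · intro a
        simp only [RingHom.comp_apply, RingHom.id_apply]
        rw [chartBwd_C, chartFwd'_k, algMap_chartB]
      · change chartFwd' k i0 j0 (chartBwd k i0 j0 (chartT k i0 j0)) = chartT k i0 j0
        rw [chartBwd_T, chartFwd'_algebraMap, chartFwd_x0]
    · have h1 := chartFwd'_inv k i0 j0
      rintro (⟨i, hi⟩ | ⟨j, hj⟩)
      · have h : (X (Sum.inl ⟨i, hi⟩) : chartB k i0 j0) = chartU k i0 j0 i := by
          simp [chartU, hi]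
        simp only [RingHom.comp_apply, RingHom.id_apply]
        rw [h, chartBwd_U, map_mul, chartFwd'_algebraMap, chartFwd_x]
        have : chartV k i0 j0 j0 = 1 := by simp [chartV]
        rw [this]
        linear_combination chartU k i0 j0 i * h1
      · have h : (X (Sum.inr ⟨j, hj⟩) : chartB k i0 j0) = chartV k i0 j0 j := by
          simp [chartV, hj]
        simp only [RingHom.comp_apply, RingHom.id_apply]
        rw [h, chartBwd_V, map_mul, chartFwd'_algebraMap, chartFwd_x]
        have : chartU k i0 j0 i0 = 1 := by simp [chartU]
        rw [this]
        linear_combination chartV k i0 j0 j * h1)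
    (by
    apply IsLocalization.ringHom_ext (Submonoid.powers (detx k i0 j0))
    apply Ideal.Quotient.ringHom_ext
    apply MvPolynomial.ringHom_ext
    · intro a
      have : Ideal.Quotient.mk (detI k r c) (C a) = algebraMap k _ a := rfl
      simp only [RingHom.comp_apply, RingHom.id_apply, this]
      rw [← IsScalarTower.algebraMap_apply k (detA k r c), chartFwd'_k, algMap_chartB, chartBwd_C]
    · rintro ⟨i, j⟩
      have : Ideal.Quotient.mk (detI k r c) (X (i, j)) = detx k i j := rfl
      simp only [RingHom.comp_apply, RingHom.id_apply, this]
      rw [chartFwd'_algebraMap, chartFwd_x, map_mul, map_mul, chartBwd_T, chartBwd_U, chartBwd_V]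
      have h1 := chartInvx_mul k i0 j0
      have h2 := congrArg (algebraMap _ (Localization.Away (detx k i0 j0)))
        (detx_rel k i i0 j0 j)
      simp only [map_mul] at h2
      linear_combination (algebraMap _ (Localization.Away (detx k i0 j0)) (detx k i j0) *
        algebraMap _ (Localization.Away (detx k i0 j0)) (detx k i0 j) * chartInvx k i0 j0 +
        algebraMap _ (Localization.Away (detx k i0 j0)) (detx k i j)) * h1 +
        chartInvx k i0 j0 * h2)) (by
    intro a
    exact chartFwd'_k k i0 j0 a)

lemma laurent_smooth : Algebra.FormallySmooth k (LaurentPolynomial k) := by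
  have : Algebra.FormallySmooth (Polynomial k) (LaurentPolynomial k) :=
    Algebra.FormallySmooth.of_isLocalization (Submonoid.powers (Polynomial.X : Polynomial k))
  have : Algebra.FormallySmooth k (Polynomial k) :=
    Algebra.FormallySmooth.of_equiv (MvPolynomial.uniqueAlgEquiv k Unit)
  have : IsScalarTower k (Polynomial k) (LaurentPolynomial k) :=
    IsScalarTower.of_algebraMap_eq fun a => by
      rw [LaurentPolynomial.algebraMap_eq_toLaurent, Polynomial.algebraMap_eq, Polynomial.toLaurent_C]
      rfl
  exact Algebra.FormallySmooth.comp k (Polynomial k) (LaurentPolynomial k)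

lemma chart_smooth : Algebra.FormallySmooth k (Localization.Away (detx k i0 j0)) := by
  have := laurent_smooth k
  have : Algebra.FormallySmooth k (chartB k i0 j0) :=
    Algebra.FormallySmooth.comp k (LaurentPolynomial k) _
  exact Algebra.FormallySmooth.of_equiv (chartEquiv k i0 j0).symm

lemma laurent_dim : ringKrullDim (LaurentPolynomial k) = 1 := by
  have : IsPrincipalIdealRing (LaurentPolynomial k) := 
    ⟨fun J => by
      obtain ⟨a, ha⟩ := IsPrincipalIdealRing.principal
        (J.under (Polynomial k))
      refine ⟨algebraMap _ _ a, ?_⟩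
      rw [← IsLocalization.map_under (Submonoid.powers (Polynomial.X : Polynomial k)) _ J, ha]
      exact (Ideal.map_span _ _).trans (by rw [Set.image_singleton])⟩
  apply IsPrincipalIdealRing.ringKrullDim_eq_one
  intro h
  let _ := h.toField
  have hinj := (LaurentPolynomial.eval₂ (RingHom.id k) 1).injective
  have h1 : LaurentPolynomial.eval₂ (RingHom.id k) 1 (LaurentPolynomial.T 1) =
    LaurentPolynomial.eval₂ (RingHom.id k) 1 1 := by simp [LaurentPolynomial.eval₂_T]
  have h2 := hinj h1
  rw [← LaurentPolynomial.T_zero] at h2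
  have h3 := congrArg (fun p => p.coeff 0) h2
  have h4 : ((1 : ℤ) = 0) := by
    by_contra h5
    simp [LaurentPolynomial.T, -LaurentPolynomial.single_eq_C_mul_T] at h3
  exact one_ne_zero h4

lemma chart_dim : ringKrullDim (Localization.Away (detx k i0 j0)) = (r + c - 1 : ℕ) := by
  have : IsNoetherianRing (LaurentPolynomial k) :=
    IsLocalization.isNoetherianRing (Submonoid.powers (Polynomial.X : Polynomial k)) _
      inferInstance
  rw [ringKrullDim_eq_of_ringEquiv (chartEquiv k i0 j0).toRingEquiv,
    MvPolynomial.ringKrullDim_of_isNoetherianRing, laurent_dim]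
  have h1 := i0.pos
  have h2 := j0.pos
  have : Nat.card ({i : Fin r // i ≠ i0} ⊕ {j : Fin c // j ≠ j0}) = (r - 1) + (c - 1) := by
    simp [Nat.card_eq_fintype_card]
  rw [this]
  have : r + c - 1 = 1 + ((r - 1) + (c - 1)) := by omega
  rw [this]
  push_cast
  rfl

end chart

section origin

variable (k : Type) [Field k] {r c : ℕ}

variable (r c) in
/-- The ideal of the origin. -/
noncomputable def detM : Ideal (detA k r c) :=
  Ideal.span (Set.range fun p : Fin r × Fin c => Ideal.Quotient.mk (detI k r c) (X p))

lemma detx_mem (i : Fin r) (j : Fin c) : detx k i j ∈ detM k r c :=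
  Ideal.subset_span ⟨(i, j), rfl⟩

lemma detM_le {J : Ideal (detA k r c)} (h : ∀ i j, detx k i j ∈ J) : detM k r c ≤ J :=
  Ideal.span_le.mpr (by rintro _ ⟨⟨i, j⟩, rfl⟩; exact h i j)

lemma minor_mem_sq (i i' : Fin r) (j j' : Fin c) :
    (X (i, j) * X (i', j') - X (i, j') * X (i', j) : MvPolynomial (Fin r × Fin c) k) ∈
      idealOfVars (Fin r × Fin c) k ^ 2 := by
  have h (p) : (X p : MvPolynomial (Fin r × Fin c) k) ∈ idealOfVars (Fin r × Fin c) k :=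
    Ideal.subset_span ⟨p, rfl⟩
  rw [pow_two]
  exact sub_mem (Ideal.mul_mem_mul (h _) (h _)) (Ideal.mul_mem_mul (h _) (h _))

lemma detI_le_sq : detI k r c ≤ idealOfVars (Fin r × Fin c) k ^ 2 := by
  refine Ideal.span_le.mpr ?_
  rintro _ ⟨i, i', j, j', rfl⟩
  exact minor_mem_sq k i i' j j'

lemma sub_const_mem (p : MvPolynomial (Fin r × Fin c) k) :
    p - C (constantCoeff p) ∈ idealOfVars (Fin r × Fin c) k := by
  rw [← pow_one (idealOfVars (Fin r × Fin c) k), mem_pow_idealOfVars_iff']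
  intro x hx
  have : x = 0 := by
    rw [← Finsupp.degree_eq_zero_iff]; omega
  subst this
  simp [constantCoeff_eq]

lemma map_vars : (idealOfVars (Fin r × Fin c) k).map (Ideal.Quotient.mk (detI k r c)) =
    detM k r c := by
  rw [idealOfVars, Ideal.map_span, detM, ← Set.range_comp]
  rfl

lemma detM_ne_top : detM k r c ≠ ⊤ := by
  intro h
  have h1 : (Ideal.map (Ideal.Quotient.mk (detI k r c)) (idealOfVars (Fin r × Fin c) k)).comap
      (Ideal.Quotient.mk (detI k r c)) = ⊤ := by rw [map_vars, h, Ideal.comap_top]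
  rw [Ideal.comap_map_of_surjective' _ Ideal.Quotient.mk_surjective, Ideal.mk_ker,
    sup_eq_left.mpr ((detI_le_sq k).trans (Ideal.pow_le_self two_ne_zero)),
    Ideal.eq_top_iff_one, ← pow_one (idealOfVars (Fin r × Fin c) k)] at h1
  have := (C_mem_pow_idealOfVars_iff (σ := Fin r × Fin c) (R := k) 1 1).mp (by simpa using h1)
  simp at this

lemma detM_decomp (a : detA k r c) : ∃ t : k, a - algebraMap k _ t ∈ detM k r c := by
  obtain ⟨p, rfl⟩ := Ideal.Quotient.mk_surjective a
  refine ⟨constantCoeff p, ?_⟩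
  rw [← map_vars]
  have := Ideal.mem_map_of_mem (Ideal.Quotient.mk (detI k r c)) (sub_const_mem k p)
  rw [map_sub] at this
  exact this

lemma detM_isMaximal : (detM k r c).IsMaximal := by
  rw [Ideal.isMaximal_iff]
  refine ⟨fun h => detM_ne_top k ((Ideal.eq_top_iff_one _).mpr h), ?_⟩
  intro J a hJ ha haJ
  obtain ⟨t, ht⟩ := detM_decomp k a
  have ht0 : t ≠ 0 := by
    rintro rfl
    simp at ht; exact ha ht
  have h1 : algebraMap k (detA k r c) t ∈ J := by
    have := J.sub_mem haJ (hJ ht)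
    simpa using this
  have := J.mul_mem_left (algebraMap k _ t⁻¹) h1
  rwa [← map_mul, inv_mul_cancel₀ ht0, map_one] at this

lemma exists_not_mem {P : Ideal (detA k r c)} (hP : P ≠ ⊤) (h : P ≠ detM k r c) :
    ∃ i j, detx k i j ∉ P := by
  by_contra! hh
  exact h ((detM_isMaximal k).eq_of_le hP (detM_le k hh)).symm

/-- A prime containing all antidiagonal sums contains everything. -/
lemma mem_of_sums {P : Ideal (detA k r c)} [P.IsPrime]
    (h : ∀ d, (∑ p : Fin r × Fin c, if (p.1 : ℕ) + p.2 = d then detx k p.1 p.2 else 0) ∈ P) :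
    ∀ d (i : Fin r) (j : Fin c), (i : ℕ) + j = d → detx k i j ∈ P := by
  intro d
  induction d using Nat.strong_induction_on with
  | _ d ih =>
  intro i j hij
  have h1 := P.mul_mem_left (detx k i j) (h d)
  rw [Finset.mul_sum, ← Finset.add_sum_erase _ _ (Finset.mem_univ (i, j))] at h1
  have h2 : ∑ p ∈ Finset.univ.erase (i, j), detx k i j *
      (if (p.1 : ℕ) + p.2 = d then detx k p.1 p.2 else 0) ∈ P := by
    refine P.sum_mem ?_
    rintro ⟨i', j'⟩ hp
    have hne : (i', j') ≠ (i, j) := (Finset.mem_erase.mp hp).1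
    dsimp only
    split_ifs with hd
    · rcases lt_trichotomy (i : ℕ) i' with hlt | heq | hgt
      · rw [detx_rel]
        exact P.mul_mem_right _ (ih (i + j') (by omega) i j' rfl)
      · exfalso
        apply hne
        ext <;> simp <;> omega
      · rw [detx_rel]
        exact P.mul_mem_left _ (ih (i' + j) (by omega) i' j rfl)
    · simp
  have h3 := (P.add_mem_iff_left h2).mp h1
  simp only [hij, if_true] at h3
  exact (Ideal.IsPrime.mem_or_mem ‹_› h3).elim id id

lemma detM_height (hr : 2 ≤ r) (hc : 2 ≤ c) : (detM k r c).height ≤ (r + c - 1 : ℕ) := by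
  classical
  let y : ℕ → detA k r c := fun d =>
    ∑ p : Fin r × Fin c, if (p.1 : ℕ) + p.2 = d then detx k p.1 p.2 else 0
  let s : Finset (detA k r c) := (Finset.range (r + c - 1)).image y
  have hs : s.card ≤ r + c - 1 := Finset.card_image_le.trans (by simp)
  have := detM_isMaximal k (r := r) (c := c)
  refine (Ideal.height_le_card_of_mem_minimalPrimes_span_finset (s := s) ?_).trans
    (by exact_mod_cast hs)
  refine ⟨⟨inferInstance, Ideal.span_le.mpr ?_⟩, ?_⟩
  · intro z hz
    obtain ⟨d, -, rfl⟩ := Finset.mem_image.mp (Finset.mem_coe.mp hz)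
    refine Ideal.sum_mem _ fun p _ => ?_
    split_ifs
    · exact detx_mem k _ _
    · exact zero_mem _
  · rintro Q ⟨hQ, hsQ⟩ -
    have : ∀ d, y d ∈ Q := by
      intro d
      by_cases hd : d < r + c - 1
      · exact hsQ (Ideal.subset_span (Finset.mem_coe.mpr
          (Finset.mem_image.mpr ⟨d, by simpa using hd, rfl⟩)))
      · have : y d = 0 := by
          refine Finset.sum_eq_zero fun p _ => if_neg ?_
          have := p.1.2
          have := p.2.2
          omega
        rw [this]; exact zero_mem _
    exact detM_le k fun i j => mem_of_sums k this _ i j rfl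

lemma det_dim (hr : 2 ≤ r) (hc : 2 ≤ c) : ringKrullDim (detA k r c) = (r + c - 1 : ℕ) := by
  apply le_antisymm
  · rw [ringKrullDim_le_iff_height_le]
    intro P hP
    by_cases h : P = detM k r c
    · subst h
      exact WithBot.coe_le_coe.mpr (detM_height k hr hc)
    · obtain ⟨i, j, hij⟩ := exists_not_mem k hP.ne_top h
      rw [← chart_dim k i j]
      have hd : Disjoint (Submonoid.powers (detx k i j) : Set (detA k r c)) P :=
        (Ideal.disjoint_powers_iff_notMem _ hP.isRadical).mpr hij
      have h1 := IsLocalization.isPrime_of_isPrime_disjoint (Submonoid.powers (detx k i j))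
        (Localization.Away (detx k i j)) P hP hd
      have h2 := IsLocalization.under_map_of_isPrime_disjoint (Submonoid.powers (detx k i j))
        (Localization.Away (detx k i j)) hP hd
      rw [← h2, IsLocalization.height_under (Submonoid.powers (detx k i j))]
      exact Ideal.height_le_ringKrullDim_of_isPrime
  · obtain ⟨i0⟩ : Nonempty (Fin r) := ⟨⟨0, by omega⟩⟩
    obtain ⟨j0⟩ : Nonempty (Fin c) := ⟨⟨0, by omega⟩⟩
    rw [← chart_dim k i0 j0, ringKrullDim_le_iff_height_le]
    intro P hP
    rw [← IsLocalization.height_under (Submonoid.powers (detx k i0 j0))]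
    exact Ideal.height_le_ringKrullDim_of_isPrime

lemma not_smooth (hr : 2 ≤ r) (hc : 2 ≤ c) [(detM k r c).IsPrime] :
    ¬ Algebra.FormallySmooth k (Localization.AtPrime (detM k r c)) := by
  intro hsm
  let m := idealOfVars (Fin r × Fin c) k
  let K := detI k r c ⊔ m ^ 3
  have hKm : K ≤ m ^ 2 := sup_le (detI_le_sq k) (Ideal.pow_le_pow_right (by norm_num))
  have hIK : detI k r c ≤ K := le_sup_left
  have hmK : m ^ 3 ≤ K := le_sup_right
  let g : (MvPolynomial (Fin r × Fin c) k ⧸ m ^ 3) →ₐ[k] (MvPolynomial (Fin r × Fin c) k ⧸ K) :=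
    Ideal.Quotient.factorₐ k hmK
  have hg : Function.Surjective g := Ideal.Quotient.factor_surjective hmK
  have hker : IsNilpotent (RingHom.ker
      (g : (MvPolynomial (Fin r × Fin c) k ⧸ m ^ 3) →+* (MvPolynomial (Fin r × Fin c) k ⧸ K))) := by
    refine ⟨3, ?_⟩
    have h1 : RingHom.ker (g : (MvPolynomial (Fin r × Fin c) k ⧸ m ^ 3) →+*
        (MvPolynomial (Fin r × Fin c) k ⧸ K)) ≤
        m.map (Ideal.Quotient.mk (m ^ 3)) := by
      intro a ha
      obtain ⟨p, rfl⟩ := Ideal.Quotient.mk_surjective a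
      have : Ideal.Quotient.mk K p = 0 := ha
      rw [Ideal.Quotient.eq_zero_iff_mem] at this
      exact Ideal.mem_map_of_mem _ (Ideal.pow_le_self two_ne_zero (hKm this))
    refine le_bot_iff.mp ((Ideal.pow_right_mono h1 3).trans ?_)
    rw [← Ideal.map_pow, Ideal.map_quotient_self]
  let q : detA k r c →ₐ[k] (MvPolynomial (Fin r × Fin c) k ⧸ K) := Ideal.Quotient.factorₐ k hIK
  have hqM : ∀ a ∈ detM k r c, IsNilpotent (q a) := by
    intro a ha
    refine ⟨3, ?_⟩
    rw [← map_vars] at ha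
    obtain ⟨p, hp, rfl⟩ := (Ideal.mem_map_iff_of_surjective _ Ideal.Quotient.mk_surjective).mp ha
    change (Ideal.Quotient.mk K p) ^ 3 = 0
    rw [← map_pow, Ideal.Quotient.eq_zero_iff_mem]
    exact hmK (Ideal.pow_mem_pow hp 3)
  have hu : ∀ a : (detM k r c).primeCompl, IsUnit (q a) := by
    rintro ⟨a, ha⟩
    obtain ⟨t, ht⟩ := detM_decomp k a
    have ht0 : t ≠ 0 := by
      rintro rfl
      simp at ht; exact ha ht
    have h1 : IsUnit (algebraMap k (MvPolynomial (Fin r × Fin c) k ⧸ K) t) :=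
      (IsUnit.mk0 t ht0).map _
    have h2 := (hqM _ ht).isUnit_add_left_of_commute h1 (Commute.all _ _)
    simpa using h2
  let f : Localization.AtPrime (detM k r c) →ₐ[k] (MvPolynomial (Fin r × Fin c) k ⧸ K) :=
    IsLocalization.liftAlgHom (M := (detM k r c).primeCompl) (f := q) hu
  let F := Algebra.FormallySmooth.liftOfSurjective (R := k)
      (A := Localization.AtPrime (detM k r c)) f g hg hker
  let G : detA k r c →ₐ[k] (MvPolynomial (Fin r × Fin c) k ⧸ m ^ 3) :=
    F.comp (IsScalarTower.toAlgHom k (detA k r c) _)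
  have hG : ∀ a, g (G a) = q a := by
    intro a
    have := Algebra.FormallySmooth.liftOfSurjective_apply (R := k)
      (A := Localization.AtPrime (detM k r c)) f g hg hker
      (algebraMap (detA k r c) _ a)
    refine this.trans ?_
    simp [f]
  have hx : ∀ i j, ∃ e ∈ m ^ 2, G (detx k i j) = Ideal.Quotient.mk (m ^ 3) (X (i, j) + e) := by
    intro i j
    obtain ⟨p, hp⟩ := Ideal.Quotient.mk_surjective (G (detx k i j))
    refine ⟨p - X (i, j), hKm ?_, ?_⟩
    · have := hG (detx k i j)
      rw [← hp] at this
      exact Ideal.Quotient.eq.mp this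
    · rw [add_sub_cancel, hp]
  let i0 : Fin r := ⟨0, by omega⟩
  let i1 : Fin r := ⟨1, by omega⟩
  let j0 : Fin c := ⟨0, by omega⟩
  let j1 : Fin c := ⟨1, by omega⟩
  obtain ⟨e1, he1, h1⟩ := hx i0 j0
  obtain ⟨e2, he2, h2⟩ := hx i1 j1
  obtain ⟨e3, he3, h3⟩ := hx i0 j1
  obtain ⟨e4, he4, h4⟩ := hx i1 j0
  have hrel := congrArg G (detx_rel k i0 i1 j0 j1)
  rw [map_mul, map_mul, h1, h2, h3, h4, ← map_mul, ← map_mul, Ideal.Quotient.eq] at hrel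
  have hX (p) : (X p : MvPolynomial (Fin r × Fin c) k) ∈ m := Ideal.subset_span ⟨p, rfl⟩
  have hXe : ∀ p, ∀ e ∈ m ^ 2, X p * e ∈ m ^ 3 := by
    intro p e he
    rw [pow_succ']
    exact Ideal.mul_mem_mul (hX p) he
  have hee : ∀ e ∈ m ^ 2, ∀ e' ∈ m ^ 2, e * e' ∈ m ^ 3 := by
    intro e he e' he'
    rw [pow_succ']
    exact Ideal.mul_mem_mul (Ideal.pow_le_self two_ne_zero he) he'
  have key : (X (i0, j0) * X (i1, j1) - X (i0, j1) * X (i1, j0) :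
      MvPolynomial (Fin r × Fin c) k) ∈ m ^ 3 := by
    have h5 := sub_mem hrel (sub_mem
      (add_mem (add_mem (hXe (i0, j0) _ he2) (hXe (i1, j1) _ he1)) (hee _ he1 _ he2))
      (add_mem (add_mem (hXe (i0, j1) _ he4) (hXe (i1, j0) _ he3)) (hee _ he3 _ he4)))
    convert h5 using 1
    ring
  rw [mem_pow_idealOfVars_iff'] at key
  have h6 := key (Finsupp.single (i0, j0) 1 + Finsupp.single (i1, j1) 1) (by simp)
  have hne : Finsupp.single (i0, j1) 1 + Finsupp.single (i1, j0) 1 ≠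
      (Finsupp.single (i0, j0) 1 + Finsupp.single (i1, j1) 1 : Fin r × Fin c →₀ ℕ) := by
    intro h
    have := DFunLike.congr_fun h (i0, j0)
    simp [i0, i1, j0, j1, Finsupp.single_apply] at this
  simp only [X, monomial_mul, coeff_sub, coeff_monomial, if_neg hne] at h6
  simp at h6

end origin

theorem determinantal_unique_singular_point
    (k : Type) [Field k] (r c : ℕ) (hr : 2 ≤ r) (hc : 2 ≤ c)
    (I : Ideal (MvPolynomial (Fin r × Fin c) k))
    (hI : I = Ideal.span {f | ∃ (i i' : Fin r) (j j' : Fin c),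
      f = X (i, j) * X (i', j') - X (i, j') * X (i', j)}) :
    -- Spec A has dimension r + c - 1
    ringKrullDim ((MvPolynomial (Fin r × Fin c) k) ⧸ I) = (r + c - 1 : ℕ) ∧
    -- a prime P of A is a smooth point iff it is not the point V(x_{i,j})
    ∀ P : PrimeSpectrum ((MvPolynomial (Fin r × Fin c) k) ⧸ I),
      (Algebra.FormallySmooth k (Localization.AtPrime P.asIdeal) ↔
        P.asIdeal ≠ Ideal.span (Set.range
          fun p : Fin r × Fin c => Ideal.Quotient.mk I (X p))) := by
  obtain rfl : I = detI k r c := hI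
  refine ⟨det_dim k hr hc, ?_⟩
  rintro ⟨P, hP⟩
  constructor
  · intro h hPM
    have hPM' : P = detM k r c := hPM
    subst hPM'
    exact not_smooth k hr hc h
  · intro h
    obtain ⟨i, j, hij⟩ := exists_not_mem k hP.ne_top h
    have : Algebra.FinitePresentation k (detA k r c) :=
      Algebra.FinitePresentation.of_finiteType.mp inferInstance
    exact (Algebra.basicOpen_subset_smoothLocus_iff (R := k) (f := detx k i j)).mpr
      (chart_smooth k i j) (show (⟨P, hP⟩ : PrimeSpectrum _) ∈
        PrimeSpectrum.basicOpen (detx k i j) from hij)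
end

section
/- Let k be a field, let (X, Y) be a generic r×(r+c) matrix with X the first r columns and Y the last c columns, and let A = k[X, Y]/(X − X^{ad}, ∧²(X,Y)), where X^{ad} := H X^t H for H the r×r unit anti-diagonal matrix. Then the blow-up of Spec A along the ideal generated by all entries of (X,Y) is smooth of dimension r + c, and each of its standard affine charts D₊(ε_{r₀,s₀}) is isomorphic either to 𝔸_k^{r+c} or to Spec of a polynomial ring localized at one coordinate (hence smooth). -/
open MvPolynomial

/-- Saturation of an ideal at an element. -/
noncomputable def satAt {P : Type*} [CommRing P] (I : Ideal P) (f : P) : Ideal P :=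
  (I.map (algebraMap P (Localization.Away f))).comap
    (algebraMap P (Localization.Away f))

theorem mem_satAt_iff {P : Type*} [CommRing P] (I : Ideal P) (f p : P) :
    p ∈ satAt I f ↔ ∃ n : ℕ, f ^ n * p ∈ I := by
  unfold satAt
  rw [Ideal.mem_comap, IsLocalization.algebraMap_mem_map_algebraMap_iff (Submonoid.powers f)]
  constructor
  · rintro ⟨m, ⟨n, rfl⟩, h⟩
    exact ⟨n, h⟩
  · rintro ⟨n, h⟩
    exact ⟨_, ⟨n, rfl⟩, h⟩

theorem le_satAt {P : Type*} [CommRing P] (I : Ideal P) (f : P) : I ≤ satAt I f :=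
  Ideal.le_comap_map

theorem satAt_cancel {P : Type*} [CommRing P] (I : Ideal P) (f p : P)
    (h : f * p ∈ satAt I f) : p ∈ satAt I f := by
  rw [mem_satAt_iff] at *
  obtain ⟨n, hn⟩ := h
  exact ⟨n + 1, by rwa [pow_succ, mul_assoc]⟩

theorem mk_satAt_cancel {P : Type*} [CommRing P] (I : Ideal P) (f : P)
    (q : P ⧸ satAt I f) (h : Ideal.Quotient.mk (satAt I f) f * q = 0) : q = 0 := by
  obtain ⟨p, rfl⟩ := Ideal.Quotient.mk_surjective q
  rw [← map_mul, Ideal.Quotient.eq_zero_iff_mem] at h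
  rw [Ideal.Quotient.eq_zero_iff_mem]
  exact satAt_cancel I f p h

theorem satAt_le_ker {P B : Type*} [CommRing P] [CommRing B] (I : Ideal P) (f : P)
    (φ : P →+* B) (hI : I ≤ RingHom.ker φ) (hf : ∀ b, φ f * b = 0 → b = 0) :
    satAt I f ≤ RingHom.ker φ := by
  intro p hp
  rw [mem_satAt_iff] at hp
  obtain ⟨n, hn⟩ := hp
  have h1 : φ (f ^ n * p) = 0 := hI hn
  clear hn
  rw [RingHom.mem_ker]
  induction n with
  | zero => simpa using h1
  | succ n ih =>
    apply ih
    apply hf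
    rw [← map_mul]
    rw [← h1]
    congr 1
    ring

theorem krullDim_mvPoly (k : Type) [Field k] (n : ℕ) :
    ringKrullDim (MvPolynomial (Fin n) k) = n := by
  rw [MvPolynomial.ringKrullDim_of_isNoetherianRing]
  simp

theorem krullDim_away (k : Type) [Field k] (n : ℕ) (i : Fin n) :
    ringKrullDim (Localization.Away (X i : MvPolynomial (Fin n) k)) = n := by
  apply le_antisymm
  · rw [← krullDim_mvPoly k n]
    apply Order.krullDim_le_of_strictMono (PrimeSpectrum.comap
      (algebraMap (MvPolynomial (Fin n) k) (Localization.Away (X i : MvPolynomial (Fin n) k))))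
    apply Monotone.strictMono_of_injective
    · intro a b h
      exact Ideal.comap_mono h
    · exact PrimeSpectrum.localization_comap_injective _ (Submonoid.powers (X i))
  · obtain ⟨m, rfl⟩ : ∃ m, n = m + 1 := ⟨n - 1, by have := i.pos; omega⟩
    let S := Localization.Away (X i : MvPolynomial (Fin (m+1)) k)
    let g : MvPolynomial (Fin (m+1)) k →ₐ[k] MvPolynomial (Fin m) k :=
      aeval (i.insertNth 1 X)
    have hg : IsUnit (g (X i)) := by simp [g]
    let G : S →+* MvPolynomial (Fin m) k := IsLocalization.Away.lift (X i) (g := g.toRingHom) hg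
    have hG : ∀ p, G (algebraMap _ S p) = g p := fun p => IsLocalization.Away.lift_eq _ hg p
    have hGs : Function.Surjective G := by
      intro p
      refine ⟨algebraMap _ S (rename i.succAbove p), ?_⟩
      rw [hG]
      simp only [g, aeval_rename]
      have : (i.insertNth (1 : MvPolynomial (Fin m) k) X : Fin (m+1) → _) ∘ i.succAbove = X := by
        ext1 j; simp
      rw [this]; simp
    have hinj : Function.Injective (algebraMap (MvPolynomial (Fin (m+1)) k) S) :=
      IsLocalization.injective S (M := Submonoid.powers (X i))
        (powers_le_nonZeroDivisors_of_noZeroDivisors (X_ne_zero i))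
    have hdom : IsDomain S := IsLocalization.isDomain_of_le_nonZeroDivisors (M := Submonoid.powers (X i : MvPolynomial (Fin (m+1)) k)) _
        (powers_le_nonZeroDivisors_of_noZeroDivisors (X_ne_zero i))
    have hne : algebraMap _ S (X i - 1 : MvPolynomial (Fin (m+1)) k) ≠ 0 := by
      rw [map_ne_zero_iff _ hinj]
      intro h
      have := congrArg (aeval (fun _ => (0:k))) h
      simp at this
    have h0 : G (algebraMap _ S (X i - 1 : MvPolynomial (Fin (m+1)) k)) = 0 := by
      rw [hG]; simp [g]
    have := ringKrullDim_quotient_succ_le_of_nonZeroDivisor (mem_nonZeroDivisors_of_ne_zero hne)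
    refine le_trans ?_ this
    have h2 := ringKrullDim_le_of_surjective (Ideal.Quotient.lift _ G (RingHom.ker G
      |>.span_singleton_le_iff_mem.mpr h0)) (Ideal.Quotient.lift_surjective_of_surjective _ _ hGs)
    rw [krullDim_mvPoly] at h2
    push_cast
    gcongr

theorem core_equiv (k : Type) [Field k] (r c : ℕ) (r₀ : Fin r) (s₀ : Fin (r + c))
    (Q : Type) [CommRing Q] [Algebra k Q] (T : Q) (E : Fin r × Fin (r + c) → Q)
    (F3 : ∀ i j, E (i, j) = E (i, s₀) * E (r₀, j))
    (F4 : ∀ i j : Fin r, E (i, Fin.castAdd c j) = E (j.rev, Fin.castAdd c i.rev))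
    (hU : ∀ (B : Type) [CommRing B] [Algebra k B] (t : B) (u : Fin r → B) (v : Fin (r + c) → B),
      (∀ b, t * b = 0 → b = 0) → u r₀ = 1 → v s₀ = 1 →
      (∀ i j : Fin r, u i * v (Fin.castAdd c j) = u j.rev * v (Fin.castAdd c i.rev)) →
      ∃ φ : Q →ₐ[k] B, φ T = t ∧ ∀ p, φ (E p) = u p.1 * v p.2)
    (hext : ∀ f g : Q →ₐ[k] Q, f T = g T → (∀ p, f (E p) = g (E p)) → f = g)
    (B : Type) [CommRing B] [Algebra k B] (t : B) (u : Fin r → B) (w : B) (y : Fin c → B)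
    (ht : ∀ b, t * b = 0 → b = 0) (hu : u r₀ = 1)
    (hv : (Fin.addCases (fun j => w * u j.rev) y : Fin (r + c) → B) s₀ = 1)
    (ψ : B →ₐ[k] Q) (hψt : ψ t = T) (hψu : ∀ i, ψ (u i) = E (i, s₀))
    (hψw : ψ w = E (r₀, Fin.castAdd c r₀.rev)) (hψy : ∀ j, ψ (y j) = E (r₀, Fin.natAdd r j))
    (hgen : ∀ f g : B →ₐ[k] B, f t = g t → (∀ i, f (u i) = g (u i)) → f w = g w →
      (∀ j, f (y j) = g (y j)) → f = g) : Nonempty (Q ≃ₐ[k] B) := by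
  obtain ⟨φ, h1, h2⟩ := hU B t u (Fin.addCases (fun j => w * u j.rev) y) ht hu hv (by
    intro i j; simp only [Fin.addCases_left, Fin.rev_rev]; ring)
  refine ⟨AlgEquiv.ofAlgHom φ ψ ?_ ?_⟩
  · apply hgen
    · simp [hψt, h1]
    · intro i
      simp [hψu, h2, hv]
    · simp [hψw, h2, hu]
    · simp [hψy, h2, hu]
  · apply hext
    · simp [hψt, h1]
    · rintro ⟨i, j⟩
      simp only [AlgHom.comp_apply, h2, map_mul, hψu, AlgHom.id_apply]
      rw [F3 i j]
      congr 1
      induction j using Fin.addCases with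
      | left j =>
        simp only [Fin.addCases_left, map_mul, hψw, hψu]
        rw [F4 r₀ j, F3 j.rev (Fin.castAdd c r₀.rev), mul_comm]
      | right j => simp [hψy]

theorem mvPoly_X_cancel {k : Type} [Field k] {n : ℕ} (i : Fin n) (b : MvPolynomial (Fin n) k)
    (h : X i * b = 0) : b = 0 :=
  (mul_eq_zero.mp h).resolve_left (X_ne_zero i)

theorem abstract_chart (k : Type) [Field k] (r c : ℕ) (r₀ : Fin r) (s₀ : Fin (r + c))
    (Q : Type) [CommRing Q] [Algebra k Q] (T : Q) (E : Fin r × Fin (r + c) → Q)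
    (F2 : E (r₀, s₀) = 1)
    (F3 : ∀ i j, E (i, j) = E (i, s₀) * E (r₀, j))
    (F4 : ∀ i j : Fin r, E (i, Fin.castAdd c j) = E (j.rev, Fin.castAdd c i.rev))
    (hU : ∀ (B : Type) [CommRing B] [Algebra k B] (t : B) (u : Fin r → B) (v : Fin (r + c) → B),
      (∀ b, t * b = 0 → b = 0) → u r₀ = 1 → v s₀ = 1 →
      (∀ i j : Fin r, u i * v (Fin.castAdd c j) = u j.rev * v (Fin.castAdd c i.rev)) →
      ∃ φ : Q →ₐ[k] B, φ T = t ∧ ∀ p, φ (E p) = u p.1 * v p.2)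
    (hext : ∀ f g : Q →ₐ[k] Q, f T = g T → (∀ p, f (E p) = g (E p)) → f = g) :
    Nonempty (Q ≃ₐ[k] MvPolynomial (Fin (r + c)) k) ∨
      ∃ i : Fin (r + c), Nonempty (Q ≃ₐ[k] Localization.Away (X i : MvPolynomial (Fin (r + c)) k)) := by
  induction s₀ using Fin.addCases with
  | right j₀ =>
    left
    let ψ : MvPolynomial (Fin (r + c)) k →ₐ[k] Q := aeval (Fin.addCases
      (fun i => if i = r₀ then T else E (i, Fin.natAdd r j₀))
      (fun j => if j = j₀ then E (r₀, Fin.castAdd c r₀.rev) else E (r₀, Fin.natAdd r j)))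
    refine core_equiv k r c r₀ _ Q T E F3 F4 hU hext (MvPolynomial (Fin (r + c)) k)
      (X (Fin.castAdd c r₀)) (fun i => if i = r₀ then 1 else X (Fin.castAdd c i))
      (X (Fin.natAdd r j₀)) (fun j => if j = j₀ then 1 else X (Fin.natAdd r j))
      (fun b => mvPoly_X_cancel _ b) (by simp) (by simp) ψ (by simp [ψ]) ?_ (by simp [ψ]) ?_ ?_
    · intro i
      by_cases h : i = r₀
      · subst h; simp [F2]
      · simp [h, ψ]
    · intro j
      by_cases h : j = j₀
      · subst h; simp [F2]
      · simp [h, ψ]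
    · intro f g ht hu hw hy
      apply MvPolynomial.algHom_ext
      intro l
      induction l using Fin.addCases with
      | left i =>
        by_cases h : i = r₀
        · rw [h, ht]
        · simpa [h] using hu i
      | right j =>
        by_cases h : j = j₀
        · rw [h, hw]
        · simpa [h] using hy j
  | left j₀ =>
    let ψ : MvPolynomial (Fin (r + c)) k →ₐ[k] Q := aeval (Fin.addCases
      (fun i => if i = r₀ then T else E (i, Fin.castAdd c j₀))
      (fun j => E (r₀, Fin.natAdd r j)))
    by_cases hj : j₀.rev = r₀
    · left
      have hj' : r₀.rev = j₀ := by rw [← hj, Fin.rev_rev]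
      refine core_equiv k r c r₀ _ Q T E F3 F4 hU hext (MvPolynomial (Fin (r + c)) k)
        (X (Fin.castAdd c r₀)) (fun i => if i = r₀ then 1 else X (Fin.castAdd c i))
        1 (fun j => X (Fin.natAdd r j))
        (fun b => mvPoly_X_cancel _ b) (by simp) (by simp [hj]) ψ (by simp [ψ]) ?_ ?_ ?_ ?_
      · intro i
        by_cases h : i = r₀
        · subst h; simp [F2]
        · simp [h, ψ]
      · rw [hj', F2, map_one]
      · intro j
        simp [ψ]
      · intro f g ht hu hw hy
        apply MvPolynomial.algHom_ext
        intro l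
        induction l using Fin.addCases with
        | left i =>
          by_cases h : i = r₀
          · rw [h, ht]
          · simpa [h] using hu i
        | right j => exact hy j
    · right
      refine ⟨Fin.castAdd c j₀.rev, ?_⟩
      let x : MvPolynomial (Fin (r + c)) k := X (Fin.castAdd c j₀.rev)
      let S := Localization.Away x
      have hunit : E (j₀.rev, Fin.castAdd c j₀) * E (r₀, Fin.castAdd c r₀.rev) = 1 := by
        rw [← F3, ← F4, F2]
      have hψx : ψ x = E (j₀.rev, Fin.castAdd c j₀) := by simp [ψ, x, hj]
      have hx : ∀ y : Submonoid.powers x, IsUnit (ψ y) := by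
        rintro ⟨_, n, rfl⟩
        simp only [map_pow, hψx]
        exact (IsUnit.of_mul_eq_one _ hunit).pow n
      let Ψ : S →ₐ[k] Q := IsLocalization.liftAlgHom (M := Submonoid.powers x) (f := ψ) hx
      have hΨ : ∀ p, Ψ (algebraMap _ S p) = ψ p := fun p => IsLocalization.lift_eq hx p
      let w : S := IsLocalization.Away.invSelf x
      have hw : algebraMap _ S x * w = 1 := IsLocalization.Away.mul_invSelf x
      have hle := powers_le_nonZeroDivisors_of_noZeroDivisors
        (show x ≠ 0 from X_ne_zero (Fin.castAdd c j₀.rev))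
      have hinj : Function.Injective (algebraMap (MvPolynomial (Fin (r + c)) k) S) :=
        IsLocalization.injective S (M := Submonoid.powers x) hle
      have hdom : IsDomain S :=
        IsLocalization.isDomain_of_le_nonZeroDivisors (M := Submonoid.powers x) _ hle
      refine core_equiv k r c r₀ _ Q T E F3 F4 hU hext S
        (algebraMap (MvPolynomial (Fin (r + c)) k) S (X (Fin.castAdd c r₀)))
        (fun i => algebraMap (MvPolynomial (Fin (r + c)) k) S (if i = r₀ then 1 else X (Fin.castAdd c i)))
        w (fun j => algebraMap (MvPolynomial (Fin (r + c)) k) S (X (Fin.natAdd r j))) ?_ (by simp) ?_ Ψ ?_ ?_ ?_ ?_ ?_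
      · intro b hb
        refine (mul_eq_zero.mp hb).resolve_left ?_
        exact (map_ne_zero_iff _ hinj).mpr (X_ne_zero _)
      · beta_reduce
        rw [Fin.addCases_left, if_neg hj, mul_comm]
        exact hw
      · rw [hΨ]; simp [ψ]
      · intro i
        rw [hΨ]
        by_cases h : i = r₀
        · subst h; simp [F2]
        · simp [h, ψ]
      · have h1 := congrArg Ψ hw
        rw [map_mul, hΨ, hψx, map_one] at h1
        calc Ψ w = (E (j₀.rev, Fin.castAdd c j₀) * E (r₀, Fin.castAdd c r₀.rev)) * Ψ w := by
              rw [hunit, one_mul]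
          _ = (E (j₀.rev, Fin.castAdd c j₀) * Ψ w) * E (r₀, Fin.castAdd c r₀.rev) := by ring
          _ = _ := by rw [h1, one_mul]
      · intro j
        rw [hΨ]; simp [ψ]
      · intro f g ht hu hw hy
        apply IsLocalization.algHom_ext (Submonoid.powers x)
        apply MvPolynomial.algHom_ext
        intro l
        induction l using Fin.addCases with
        | left i =>
          by_cases h : i = r₀
          · rw [h]; exact ht
          · have h3 := hu i
            simp only [if_neg h] at h3
            exact h3
        | right j => exact hy j

theorem blowup_chart_of_symmetric_determinantal
    (k : Type) [Field k] (r c : ℕ) (hr : 1 ≤ r)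
    (r₀ : Fin r) (s₀ : Fin (r + c))
    (I₀ : Ideal (MvPolynomial ((Fin r × Fin (r + c)) ⊕ (Fin r × Fin (r + c))) k))
    (hI₀ : I₀ =
      -- the symmetry condition X = X^{ad}, i.e. x_{i,j} = x_{r+1-j, r+1-i}
      Ideal.span {f | ∃ (i j : Fin r),
          f = X (Sum.inl (i, Fin.castAdd c j))
            - X (Sum.inl (j.rev, Fin.castAdd c i.rev))} ⊔
      -- the 2×2 minors of the full r×(r+c) matrix (X,Y)
      Ideal.span {f | ∃ (i i' : Fin r) (j j' : Fin (r + c)),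
          f = X (Sum.inl (i, j)) * X (Sum.inl (i', j'))
            - X (Sum.inl (i, j')) * X (Sum.inl (i', j))} ⊔
      -- blow-up chart relations x_p = x_{(r₀,s₀)} ε_p  and  ε_{(r₀,s₀)} = 1
      Ideal.span {f | ∃ p : Fin r × Fin (r + c),
          f = X (Sum.inl p) - X (Sum.inl (r₀, s₀)) * X (Sum.inr p)} ⊔
      Ideal.span {X (Sum.inr (r₀, s₀)) - 1}) :
    -- each chart is smooth of dimension r + c ...
    Algebra.FormallySmooth k
      (MvPolynomial ((Fin r × Fin (r + c)) ⊕ (Fin r × Fin (r + c))) k ⧸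
        satAt I₀ (X (Sum.inl (r₀, s₀)))) ∧
    ringKrullDim
      (MvPolynomial ((Fin r × Fin (r + c)) ⊕ (Fin r × Fin (r + c))) k ⧸
        satAt I₀ (X (Sum.inl (r₀, s₀)))) = (r + c : ℕ) ∧
    -- ... and is isomorphic to affine (r+c)-space or to a polynomial ring
    -- in r + c variables localized at one coordinate
    (Nonempty
      ((MvPolynomial ((Fin r × Fin (r + c)) ⊕ (Fin r × Fin (r + c))) k ⧸
          satAt I₀ (X (Sum.inl (r₀, s₀)))) ≃+*
        MvPolynomial (Fin (r + c)) k) ∨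
     ∃ i : Fin (r + c), Nonempty
      ((MvPolynomial ((Fin r × Fin (r + c)) ⊕ (Fin r × Fin (r + c))) k ⧸
          satAt I₀ (X (Sum.inl (r₀, s₀)))) ≃+*
        Localization.Away (X i : MvPolynomial (Fin (r + c)) k))) := by
  let P := MvPolynomial ((Fin r × Fin (r + c)) ⊕ (Fin r × Fin (r + c))) k
  let T₀ : MvPolynomial ((Fin r × Fin (r + c)) ⊕ (Fin r × Fin (r + c))) k := X (Sum.inl (r₀, s₀))
  let mk : P →ₐ[k] P ⧸ satAt I₀ T₀ := Ideal.Quotient.mkₐ k (satAt I₀ T₀)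
  let T := mk T₀
  let E : Fin r × Fin (r + c) → P ⧸ satAt I₀ T₀ := fun p => mk (X (Sum.inr p))
  have hmk : ∀ p ∈ I₀, mk p = 0 := fun p hp =>
    Ideal.Quotient.eq_zero_iff_mem.mpr (le_satAt I₀ T₀ hp)
  have hcancel : ∀ q, T * q = 0 → q = 0 := fun q hq => mk_satAt_cancel I₀ T₀ q hq
  have G3 : ∀ p, mk (X (Sum.inl p)) = T * E p := by
    intro p
    rw [← sub_eq_zero, ← map_mul, ← map_sub]
    apply hmk
    rw [hI₀]
    exact Ideal.mem_sup_left (Ideal.mem_sup_right (Ideal.subset_span ⟨p, rfl⟩))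
  have F2 : E (r₀, s₀) = 1 := by
    rw [← sub_eq_zero, ← map_one mk, ← map_sub]
    apply hmk
    rw [hI₀]
    exact Ideal.mem_sup_right (Ideal.subset_span rfl)
  have F3 : ∀ i j, E (i, j) = E (i, s₀) * E (r₀, j) := by
    intro i j
    have h : mk (X (Sum.inl (i, j)) * X (Sum.inl (r₀, s₀))
            - X (Sum.inl (i, s₀)) * X (Sum.inl (r₀, j))) = 0 := by
      apply hmk
      rw [hI₀]
      exact Ideal.mem_sup_left (Ideal.mem_sup_left (Ideal.mem_sup_right
        (Ideal.subset_span ⟨i, r₀, j, s₀, rfl⟩)))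
    rw [map_sub, map_mul, map_mul, G3, G3, G3, G3, F2] at h
    rw [← sub_eq_zero]
    apply hcancel
    apply hcancel
    rw [← h]
    ring
  have F4 : ∀ i j : Fin r, E (i, Fin.castAdd c j) = E (j.rev, Fin.castAdd c i.rev) := by
    intro i j
    have h : mk (X (Sum.inl (i, Fin.castAdd c j))
            - X (Sum.inl (j.rev, Fin.castAdd c i.rev))) = 0 := by
      apply hmk
      rw [hI₀]
      exact Ideal.mem_sup_left (Ideal.mem_sup_left (Ideal.mem_sup_left
        (Ideal.subset_span ⟨i, j, rfl⟩)))
    rw [map_sub, G3, G3, ← mul_sub] at h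
    rw [← sub_eq_zero]
    exact hcancel _ h
  have key := abstract_chart k r c r₀ s₀ (P ⧸ satAt I₀ T₀) T E F2 F3 F4 ?_ ?_
  · change Algebra.FormallySmooth k (P ⧸ satAt I₀ T₀) ∧
      ringKrullDim (P ⧸ satAt I₀ T₀) = (r + c : ℕ) ∧ _
    rcases key with ⟨⟨e⟩⟩ | ⟨i, ⟨e⟩⟩
    · refine ⟨Algebra.FormallySmooth.of_equiv e.symm, ?_, Or.inl ⟨e.toRingEquiv⟩⟩
      rw [ringKrullDim_eq_of_ringEquiv e.toRingEquiv, krullDim_mvPoly]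
    · refine ⟨?_, ?_, Or.inr ⟨i, ⟨e.toRingEquiv⟩⟩⟩
      · have : Algebra.FormallySmooth (MvPolynomial (Fin (r + c)) k)
            (Localization.Away (X i : MvPolynomial (Fin (r + c)) k)) :=
          Algebra.FormallySmooth.of_isLocalization (Submonoid.powers (X i))
        have := Algebra.FormallySmooth.comp k (MvPolynomial (Fin (r + c)) k)
          (Localization.Away (X i : MvPolynomial (Fin (r + c)) k))
        exact Algebra.FormallySmooth.of_equiv e.symm
      · rw [ringKrullDim_eq_of_ringEquiv e.toRingEquiv, krullDim_away]
  · intro B _ _ t u v ht hu hv hs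
    let φ : MvPolynomial ((Fin r × Fin (r + c)) ⊕ (Fin r × Fin (r + c))) k →ₐ[k] B :=
      aeval (Sum.elim (fun p => t * (u p.1 * v p.2)) (fun p => u p.1 * v p.2))
    have hI : I₀ ≤ RingHom.ker (φ : MvPolynomial ((Fin r × Fin (r + c)) ⊕ (Fin r × Fin (r + c))) k →+* B) := by
      rw [hI₀]
      refine sup_le (sup_le (sup_le ?_ ?_) ?_) ?_ <;> rw [Ideal.span_le]
      · rintro _ ⟨i, j, rfl⟩
        simp [RingHom.mem_ker, φ, hs i j]
      · rintro _ ⟨i, i', j, j', rfl⟩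
        simp only [SetLike.mem_coe, RingHom.mem_ker, φ, RingHom.coe_coe, map_sub, map_mul,
          aeval_X, Sum.elim_inl]
        ring
      · rintro _ ⟨p, rfl⟩
        simp [RingHom.mem_ker, φ, hu, hv]
      · rintro _ rfl
        simp [RingHom.mem_ker, φ, hu, hv]
    have hT : φ T₀ = t := by simp [φ, T₀, hu, hv]
    have hk := satAt_le_ker I₀ T₀ (φ : MvPolynomial ((Fin r × Fin (r + c)) ⊕ (Fin r × Fin (r + c))) k →+* B) hI (by
      intro b hb
      apply ht
      rw [← hT]
      exact hb)
    refine ⟨Ideal.Quotient.liftₐ (satAt I₀ T₀) φ (fun a ha => hk ha), hT, ?_⟩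
    intro p
    change φ (X (Sum.inr p)) = _
    simp [φ]
  · intro f g h1 h2
    apply Ideal.Quotient.algHom_ext
    apply MvPolynomial.algHom_ext
    rintro (p | p)
    · change f (mk (X (Sum.inl p))) = g (mk (X (Sum.inl p)))
      rw [G3, map_mul, map_mul, h1, h2]
    · exact h2 p
end

section
/- Let k be a field of characteristic ≠ 2 and R = k[T₁, T₂, s, t^{-1}]/(s(s·q(T₂) − 2)) with q(T₂) a nondegenerate quadratic form. Then Spec R is reduced with exactly 2 irreducible components V(s) and V(s·q(T₂) − 2), these components are disjoint (since s = 0 and s·q(T₂) = 2 cannot both hold), and each is smooth of the same dimension. -/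
open MvPolynomial

lemma aux_poly_height (R : Type) [CommRing R] [IsNoetherianRing R]
    (P : Ideal (Polynomial R)) [P.IsMaximal] :
    P.height = (P.comap Polynomial.C).height + 1 :=
  Polynomial.height_eq_height_add_one (P.under R) P

lemma aux_height (k : Type) [Field k] (ι : Type) [Finite ι] :
    ∀ M : Ideal (MvPolynomial ι k), M.IsMaximal → M.height = Nat.card ι := by
  induction ι using Finite.induction_empty_option with
  | of_equiv e H =>
    intro M hM
    have := H (M.comap (renameEquiv k e).toRingEquiv) inferInstance
    rw [← Nat.card_congr e, ← this, RingEquiv.height_comap]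
  | h_empty =>
    intro M hM
    have h := M.height_le_ringKrullDim_of_ne_top hM.ne_top
    rw [MvPolynomial.ringKrullDim_of_isNoetherianRing] at h
    simp at h
    simpa using h
  | h_option IH =>
    rename_i α _
    intro M hM
    let e := (optionEquivLeft k α).toRingEquiv
    have hN : (M.comap e.symm).IsMaximal := inferInstance
    have hp : ((M.comap e.symm).comap Polynomial.C).IsMaximal :=
      Polynomial.isMaximal_comap_C_of_isJacobsonRing _
    have h2 := aux_poly_height _ (M.comap e.symm)
    rw [RingEquiv.height_comap, IH _ hp] at h2
    rw [h2]
    simp [Nat.card_eq_fintype_card]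

lemma aux_dim (k : Type) [Field k] (ι : Type) [Finite ι] (f : MvPolynomial ι k) (hf : f ≠ 0)
    (B : Type) [CommRing B] [Algebra (MvPolynomial ι k) B] [IsLocalization.Away f B] :
    ringKrullDim B = Nat.card ι := by
  have : IsDomain B := IsLocalization.isDomain_of_le_nonZeroDivisors B
    (powers_le_nonZeroDivisors_of_noZeroDivisors hf)
  have key : ∀ J : Ideal B, J.IsMaximal → J.height = Nat.card ι := fun J hJ => by
    rw [← IsLocalization.height_under (Submonoid.powers f)]
    exact aux_height k ι _ ((IsLocalization.isMaximal_iff_isMaximal_disjoint B f J).mp hJ).1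
  apply le_antisymm
  · rw [ringKrullDim_le_iff_isMaximal_height_le]
    intro J hJ
    rw [key J hJ]; rfl
  · obtain ⟨J, hJ⟩ := Ideal.exists_maximal B
    have := J.height_le_ringKrullDim_of_ne_top hJ.ne_top
    rw [key J hJ] at this
    exact this


lemma aux_equiv (k σ L B : Type) [Field k] [CommRing L] [CommRing B]
    [Algebra (MvPolynomial (σ ⊕ Fin 2) k) L] [Algebra k L]
    [IsScalarTower k (MvPolynomial (σ ⊕ Fin 2) k) L]
    [IsLocalization.Away (X (Sum.inr 1) : MvPolynomial (σ ⊕ Fin 2) k) L]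
    [Algebra (MvPolynomial (σ ⊕ Unit) k) B] [Algebra k B]
    [IsScalarTower k (MvPolynomial (σ ⊕ Unit) k) B]
    (f : MvPolynomial (σ ⊕ Unit) k) [IsLocalization.Away f B]
    (j : σ ⊕ Unit → σ ⊕ Fin 2) (hj : j = Sum.map id (fun _ => 1))
    (b : B) (v : σ ⊕ Fin 2 → B)
    (hv : v = Sum.elim (fun i => algebraMap (MvPolynomial (σ ⊕ Unit) k) B (X (Sum.inl i)))
      ![b, algebraMap (MvPolynomial (σ ⊕ Unit) k) B (X (Sum.inr ()))])
    (g : MvPolynomial (σ ⊕ Fin 2) k)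
    (h1 : IsUnit (algebraMap (MvPolynomial (σ ⊕ Unit) k) B (X (Sum.inr ()) : MvPolynomial (σ ⊕ Unit) k)))
    (h2 : IsUnit (Ideal.Quotient.mk (Ideal.span {algebraMap _ L g})
      (algebraMap _ L (rename j f))))
    (h3 : aeval v g = 0)
    (h4 : ∀ ψ : B →ₐ[k] (L ⧸ Ideal.span {algebraMap _ L g}),
      (∀ p : MvPolynomial (σ ⊕ Unit) k, ψ (algebraMap _ B p) = Ideal.Quotient.mk _ (algebraMap _ L (rename j p))) →
      ψ b = Ideal.Quotient.mk _ (algebraMap (MvPolynomial (σ ⊕ Fin 2) k) L (X (Sum.inr 0)))) :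
    Nonempty (B ≃ₐ[k] (L ⧸ Ideal.span {algebraMap _ L g})) := by
  have hu1 : ∀ y : Submonoid.powers (X (Sum.inr 1) : MvPolynomial (σ ⊕ Fin 2) k),
      IsUnit (aeval v (y : MvPolynomial (σ ⊕ Fin 2) k)) := by
    rintro ⟨_, n, rfl⟩
    simp only [map_pow, aeval_X]
    exact IsUnit.pow _ (by simpa [hv] using h1)
  let F0 : L →ₐ[k] B := IsLocalization.liftAlgHom
    (M := Submonoid.powers (X (Sum.inr 1) : MvPolynomial (σ ⊕ Fin 2) k)) (f := aeval v) hu1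
  have hF0 : ∀ p, F0 (algebraMap _ L p) = aeval v p := fun p => IsLocalization.lift_eq _ p
  let F : (L ⧸ Ideal.span {algebraMap _ L g}) →ₐ[k] B := Ideal.Quotient.liftₐ _ F0 (by
    intro x hx
    obtain ⟨c, rfl⟩ := Ideal.mem_span_singleton'.mp hx
    rw [map_mul, hF0, h3, mul_zero])
  have hF : ∀ p, F (Ideal.Quotient.mk _ (algebraMap _ L p)) = aeval v p := hF0
  let G0 : MvPolynomial (σ ⊕ Unit) k →ₐ[k] (L ⧸ Ideal.span {algebraMap _ L g}) :=
    (Ideal.Quotient.mkₐ k _).comp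
      ((IsScalarTower.toAlgHom k (MvPolynomial (σ ⊕ Fin 2) k) L).comp (rename j))
  have hG0 : ∀ p, G0 p = Ideal.Quotient.mk _ (algebraMap _ L (rename j p)) := fun p => rfl
  have hu2 : ∀ y : Submonoid.powers f, IsUnit (G0 (y : MvPolynomial (σ ⊕ Unit) k)) := by
    rintro ⟨_, n, rfl⟩
    rw [map_pow]
    exact IsUnit.pow _ h2
  let G : B →ₐ[k] (L ⧸ Ideal.span {algebraMap _ L g}) :=
    IsLocalization.liftAlgHom (M := Submonoid.powers f) (f := G0) hu2
  have hG : ∀ p, G (algebraMap _ B p) = Ideal.Quotient.mk _ (algebraMap _ L (rename j p)) :=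
    fun p => IsLocalization.lift_eq _ p
  have hb := h4 G hG
  refine ⟨AlgEquiv.ofAlgHom G F ?_ ?_⟩
  · apply Ideal.Quotient.algHom_ext
    apply IsLocalization.algHom_ext (Submonoid.powers (X (Sum.inr 1) : MvPolynomial (σ ⊕ Fin 2) k))
    apply MvPolynomial.algHom_ext
    intro i
    change G (F (Ideal.Quotient.mk _ (algebraMap _ L (X i)))) =
      Ideal.Quotient.mk _ (algebraMap _ L (X i))
    rw [hF, aeval_X, hv]
    rcases i with i | i
    · simp [hG, hj]
    · fin_cases i
      · simpa using hb
      · simp [hG, hj]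
  · apply IsLocalization.algHom_ext (Submonoid.powers f)
    apply MvPolynomial.algHom_ext
    intro i
    change F (G (algebraMap (MvPolynomial (σ ⊕ Unit) k) B (X i))) = algebraMap (MvPolynomial (σ ⊕ Unit) k) B (X i)
    rw [hG, hF, hv, hj]
    rcases i with i | i <;> simp

lemma aux_span (k : Type) [Field k] (L B : Type) [CommRing L] [CommRing B] [Algebra k L]
    [Algebra k B] [IsDomain B] (I : Ideal L) (e : B ≃ₐ[k] (L ⧸ I)) : I.IsPrime := by
  rw [← Ideal.Quotient.isDomain_iff_prime]
  exact e.symm.toMulEquiv.isDomain B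

lemma aux_min (L : Type) [CommRing L] (x y : L) (hx : (Ideal.span {x}).IsPrime)
    (hy : (Ideal.span {y}).IsPrime) (h : Ideal.span {x} ⊔ Ideal.span {y} = ⊤) :
    IsReduced (L ⧸ Ideal.span {x * y}) ∧
    (Ideal.span {x * y}).minimalPrimes = {Ideal.span {x}, Ideal.span {y}} := by
  have hm : Ideal.span {x * y} = Ideal.span {x} ⊓ Ideal.span {y} := by
    rw [← Ideal.mul_eq_inf_of_coprime h, Ideal.span_singleton_mul_span_singleton]
  constructor
  · rw [← Ideal.isRadical_iff_quotient_reduced, hm]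
    exact hx.isRadical.inf hy.isRadical
  · rw [hm]
    have n1 : ¬ Ideal.span {x} ≤ Ideal.span {y} := fun hl => by
      rw [sup_eq_right.mpr hl] at h; exact hy.ne_top h
    have n2 : ¬ Ideal.span {y} ≤ Ideal.span {x} := fun hl => by
      rw [sup_eq_left.mpr hl] at h; exact hx.ne_top h
    ext p
    simp only [Set.mem_insert_iff, Set.mem_singleton_iff]
    constructor
    · rintro ⟨⟨hp, hle⟩, hmin⟩
      rcases (hp.inf_le).mp hle with h' | h'
      · left; exact le_antisymm (hmin ⟨hx, inf_le_left⟩ h') h'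
      · right; exact le_antisymm (hmin ⟨hy, inf_le_right⟩ h') h'
    · rintro (rfl | rfl)
      · refine ⟨⟨hx, inf_le_left⟩, ?_⟩
        rintro r ⟨hr, hle⟩ hrx
        rcases (hr.inf_le).mp hle with h' | h'
        · exact h'
        · exact absurd (h'.trans hrx) n2
      · refine ⟨⟨hy, inf_le_right⟩, ?_⟩
        rintro r ⟨hr, hle⟩ hrx
        rcases (hr.inf_le).mp hle with h' | h'
        · exact absurd (h'.trans hrx) n1
        · exact h'

lemma aux_q (k : Type) [Field k] (h2 : (2 : k) ≠ 0) (a m : ℕ) (hm : 1 ≤ m) :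
    (∑ i : Fin m, X (Sum.inl (Sum.inr i)) * X (Sum.inl (Sum.inr i.rev)) :
      MvPolynomial ((Fin a ⊕ Fin m) ⊕ Unit) k) ≠ 0 := by
  intro h
  -- evaluate at the vector supported at the indices 0 and its reverse
  let z : Fin m := ⟨0, hm⟩
  have h' := congrArg (MvPolynomial.eval
    (Sum.elim (Sum.elim (fun _ => (0 : k)) (fun i => if i = z ∨ i = z.rev then 1 else 0))
      (fun _ => 0))) h
  simp only [map_sum, map_mul, eval_X, Sum.elim_inl, Sum.elim_inr, map_zero] at h'
  have h'' : ∀ i : Fin m, ((if i = z ∨ i = z.rev then (1 : k) else 0) *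
      (if i.rev = z ∨ i.rev = z.rev then 1 else 0)) = if i ∈ ({z, z.rev} : Finset (Fin m)) then 1 else 0 := by
    intro i
    have e1 : i.rev = z ↔ i = z.rev := by
      rw [← Fin.rev_inj, Fin.rev_rev]
    simp only [e1, Fin.rev_inj, Finset.mem_insert, Finset.mem_singleton, or_comm]
    by_cases hi : i = z ∨ i = z.rev <;> simp [hi]
  simp only [h''] at h'
  rw [Finset.sum_ite_mem, Finset.univ_inter, Finset.sum_const, nsmul_eq_mul, mul_one] at h'
  by_cases hz : z = z.rev
  · rw [← hz] at h'; simp at h'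
  · rw [Finset.card_pair hz] at h'
    exact h2 (by simpa using h')

lemma aux_comp (k σ L : Type) [Finite σ] [Field k] [CommRing L]
    [Algebra (MvPolynomial (σ ⊕ Fin 2) k) L] [Algebra k L]
    [IsScalarTower k (MvPolynomial (σ ⊕ Fin 2) k) L]
    [IsLocalization.Away (X (Sum.inr 1) : MvPolynomial (σ ⊕ Fin 2) k) L]
    (f : MvPolynomial (σ ⊕ Unit) k) (hf : f ≠ 0) (I : Ideal L)
    (h : Nonempty (Localization.Away f ≃ₐ[k] (L ⧸ I))) :
    I.IsPrime ∧ Algebra.FormallySmooth k (L ⧸ I) ∧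
      ringKrullDim (L ⧸ I) = Nat.card (σ ⊕ Unit) := by
  obtain ⟨e⟩ := h
  have : IsDomain (Localization.Away f) := IsLocalization.isDomain_of_le_nonZeroDivisors _
    (powers_le_nonZeroDivisors_of_noZeroDivisors hf)
  refine ⟨aux_span k L _ I e, .of_equiv e, ?_⟩
  rw [← ringKrullDim_eq_of_ringEquiv e.toRingEquiv]
  exact aux_dim k _ f hf _

lemma aux_main (k σ L : Type) [Finite σ] [Field k] [CommRing L] (two : (2 : k) ≠ 0)
    [Algebra (MvPolynomial (σ ⊕ Fin 2) k) L] [Algebra k L]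
    [IsScalarTower k (MvPolynomial (σ ⊕ Fin 2) k) L]
    [IsLocalization.Away (X (Sum.inr 1) : MvPolynomial (σ ⊕ Fin 2) k) L]
    (q0 : MvPolynomial (σ ⊕ Unit) k) (hq0 : q0 ≠ 0)
    (q : MvPolynomial (σ ⊕ Fin 2) k) (hq : q = rename (Sum.map id (fun _ => 1)) q0) :
    Nonempty (Localization.Away (X (Sum.inr ()) : MvPolynomial (σ ⊕ Unit) k) ≃ₐ[k]
      (L ⧸ Ideal.span {algebraMap _ L (X (Sum.inr 0) : MvPolynomial (σ ⊕ Fin 2) k)})) ∧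
    Nonempty (Localization.Away (X (Sum.inr ()) * q0 : MvPolynomial (σ ⊕ Unit) k) ≃ₐ[k]
      (L ⧸ Ideal.span {algebraMap _ L (X (Sum.inr 0) * q - 2 : MvPolynomial (σ ⊕ Fin 2) k)})) := by
  have hL : IsUnit (algebraMap _ L (X (Sum.inr 1) : MvPolynomial (σ ⊕ Fin 2) k)) :=
    IsLocalization.Away.algebraMap_isUnit _
  constructor
  · refine aux_equiv k σ L _ (X (Sum.inr ())) _ rfl 0 _ rfl _ ?_ ?_ ?_ ?_
    · exact IsLocalization.Away.algebraMap_isUnit _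
    · simpa using hL.map (Ideal.Quotient.mk (Ideal.span {algebraMap (MvPolynomial (σ ⊕ Fin 2) k) L (X (Sum.inr 0))}))
    · simp
    · intro ψ hψ
      rw [map_zero, eq_comm, Ideal.Quotient.eq_zero_iff_mem]
      exact Ideal.mem_span_singleton_self _
  · have hB : IsUnit (algebraMap _ (Localization.Away (X (Sum.inr ()) * q0)) (X (Sum.inr ()) * q0)) :=
      IsLocalization.Away.algebraMap_isUnit _
    rw [map_mul, IsUnit.mul_iff] at hB
    obtain ⟨hB1, hB2⟩ := hB
    obtain ⟨c, hc⟩ := hB2.exists_left_inv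
    have h20 : Ideal.Quotient.mk (Ideal.span {algebraMap _ L (X (Sum.inr 0) * q - 2)})
        (algebraMap _ L (X (Sum.inr 0) * q - 2)) = 0 := by
      rw [Ideal.Quotient.eq_zero_iff_mem]
      exact Ideal.mem_span_singleton_self _
    have hrel : Ideal.Quotient.mk (Ideal.span {algebraMap _ L (X (Sum.inr 0) * q - 2)})
        (algebraMap (MvPolynomial (σ ⊕ Fin 2) k) L (X (Sum.inr 0))) *
        Ideal.Quotient.mk (Ideal.span {algebraMap _ L (X (Sum.inr 0) * q - 2)})
        (algebraMap _ L q) = 2 := by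
      generalize Ideal.span {algebraMap _ L (X (Sum.inr 0) * q - 2)} = I at h20
      simp only [map_sub, map_mul, map_ofNat] at h20
      exact sub_eq_zero.mp h20
    have hu2 : IsUnit (2 : L ⧸ Ideal.span {algebraMap _ L (X (Sum.inr 0) * q - 2)}) := by
      have := (IsUnit.mk0 (2 : k) two).map
        (algebraMap k (L ⧸ Ideal.span {algebraMap _ L (X (Sum.inr 0) * q - 2)}))
      rwa [map_ofNat] at this
    have huq : IsUnit (Ideal.Quotient.mk (Ideal.span {algebraMap _ L (X (Sum.inr 0) * q - 2)})
        (algebraMap _ L q)) := by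
      rw [← hrel, IsUnit.mul_iff] at hu2
      exact hu2.2
    refine aux_equiv k σ L _ (X (Sum.inr ()) * q0) _ rfl (2 * c) _ rfl _ hB1 ?_ ?_ ?_
    · rw [map_mul, map_mul, map_mul, IsUnit.mul_iff, ← hq]
      refine ⟨?_, huq⟩
      simpa using hL.map
        (Ideal.Quotient.mk (Ideal.span {algebraMap _ L (X (Sum.inr 0) * q - 2)}))
    · have hqq : ∀ v : σ ⊕ Fin 2 → Localization.Away (X (Sum.inr ()) * q0),
          v = Sum.elim (fun i => algebraMap (MvPolynomial (σ ⊕ Unit) k) _ (X (Sum.inl i)))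
            ![2 * c, algebraMap (MvPolynomial (σ ⊕ Unit) k) _ (X (Sum.inr ()))] →
          aeval v q = algebraMap _ (Localization.Away (X (Sum.inr ()) * q0)) q0 := by
        intro v hv
        rw [hq, aeval_rename]
        have : aeval (v ∘ Sum.map id fun _ => 1) =
            IsScalarTower.toAlgHom k (MvPolynomial (σ ⊕ Unit) k)
              (Localization.Away (X (Sum.inr ()) * q0)) := by
          apply MvPolynomial.algHom_ext
          intro i
          rcases i with i | i <;> simp [hv]
        rw [this]; rfl
      rw [map_sub, map_mul, hqq _ rfl, aeval_X, map_ofNat]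
      simp [mul_assoc, hc]
    · intro ψ hψ
      apply huq.mul_right_cancel
      rw [hrel]
      have := hψ q0
      rw [← hq] at this
      rw [← this, ← map_mul, mul_assoc, hc, mul_one, map_ofNat]

theorem strata_chart_disjoint_components
    (k : Type) [Field k] (h2 : (2 : k) ≠ 0)
    (a m : ℕ) (hm : 1 ≤ m)
    -- variables: T₁ = inl (inl i), T₂ = inl (inr i), s = inr 0, t = inr 1
    (q : MvPolynomial ((Fin a ⊕ Fin m) ⊕ Fin 2) k)
    (hq : q = ∑ i : Fin m, X (Sum.inl (Sum.inr i)) * X (Sum.inl (Sum.inr i.rev)))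
    (φ : MvPolynomial ((Fin a ⊕ Fin m) ⊕ Fin 2) k →+*
        Localization.Away (X (Sum.inr 1) : MvPolynomial ((Fin a ⊕ Fin m) ⊕ Fin 2) k))
    (hφ : φ = algebraMap _ _) :
    -- reduced
    IsReduced (Localization.Away
        (X (Sum.inr 1) : MvPolynomial ((Fin a ⊕ Fin m) ⊕ Fin 2) k) ⧸
      Ideal.span {φ (X (Sum.inr 0) * (X (Sum.inr 0) * q - 2))}) ∧
    -- exactly two irreducible components V(s) and V(s·q - 2)
    (Ideal.span {φ (X (Sum.inr 0) * (X (Sum.inr 0) * q - 2))}).minimalPrimes =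
      { Ideal.span {φ (X (Sum.inr 0))}, Ideal.span {φ (X (Sum.inr 0) * q - 2)} } ∧
    -- the two components are disjoint
    (Ideal.span {φ (X (Sum.inr 0))} ⊔ Ideal.span {φ (X (Sum.inr 0) * q - 2)} = ⊤) ∧
    -- each component is smooth, of the same dimension
    Algebra.FormallySmooth k (Localization.Away
        (X (Sum.inr 1) : MvPolynomial ((Fin a ⊕ Fin m) ⊕ Fin 2) k) ⧸
      Ideal.span {φ (X (Sum.inr 0))}) ∧
    Algebra.FormallySmooth k (Localization.Away
        (X (Sum.inr 1) : MvPolynomial ((Fin a ⊕ Fin m) ⊕ Fin 2) k) ⧸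
      Ideal.span {φ (X (Sum.inr 0) * q - 2)}) ∧
    ringKrullDim (Localization.Away
        (X (Sum.inr 1) : MvPolynomial ((Fin a ⊕ Fin m) ⊕ Fin 2) k) ⧸
      Ideal.span {φ (X (Sum.inr 0))}) =
    ringKrullDim (Localization.Away
        (X (Sum.inr 1) : MvPolynomial ((Fin a ⊕ Fin m) ⊕ Fin 2) k) ⧸
      Ideal.span {φ (X (Sum.inr 0) * q - 2)}) := by
  have hq' : q = rename (Sum.map id (fun _ => 1))
      (∑ i : Fin m, X (Sum.inl (Sum.inr i)) * X (Sum.inl (Sum.inr i.rev)) :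
      MvPolynomial ((Fin a ⊕ Fin m) ⊕ Unit) k) := by
    rw [hq]; simp
  have hq0 := aux_q k h2 a m hm
  obtain ⟨e1, e2⟩ := aux_main k (Fin a ⊕ Fin m)
    (Localization.Away (X (Sum.inr 1) : MvPolynomial ((Fin a ⊕ Fin m) ⊕ Fin 2) k)) h2 _ hq0 q hq'
  obtain ⟨p1, s1, d1⟩ := aux_comp k _ _ _ (X_ne_zero _) _ e1
  obtain ⟨p2, s2, d2⟩ := aux_comp k _ _ _ (mul_ne_zero (X_ne_zero _) hq0) _ e2
  subst hφ
  have hu : IsUnit (2 : Localization.Away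
      (X (Sum.inr 1) : MvPolynomial ((Fin a ⊕ Fin m) ⊕ Fin 2) k)) := by
    have := (IsUnit.mk0 (2 : k) h2).map (algebraMap k (Localization.Away
      (X (Sum.inr 1) : MvPolynomial ((Fin a ⊕ Fin m) ⊕ Fin 2) k)))
    rwa [map_ofNat] at this
  have hcop : Ideal.span {algebraMap (MvPolynomial ((Fin a ⊕ Fin m) ⊕ Fin 2) k)
      (Localization.Away (X (Sum.inr 1) : MvPolynomial ((Fin a ⊕ Fin m) ⊕ Fin 2) k))
        (X (Sum.inr 0))} ⊔
      Ideal.span {algebraMap (MvPolynomial ((Fin a ⊕ Fin m) ⊕ Fin 2) k)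
      (Localization.Away (X (Sum.inr 1) : MvPolynomial ((Fin a ⊕ Fin m) ⊕ Fin 2) k))
        (X (Sum.inr 0) * q - 2)} = ⊤ := by
    apply Ideal.eq_top_of_isUnit_mem _ _ hu
    rw [← Ideal.span_union]
    rw [Set.singleton_union, Ideal.mem_span_pair]
    refine ⟨algebraMap _ _ q, -1, ?_⟩
    rw [map_sub, map_mul, map_ofNat]
    ring
  have hmin := aux_min _ _ _ p1 p2 hcop
  rw [← map_mul] at hmin
  exact ⟨hmin.1, hmin.2, hcop, s1, s2, d1.trans d2.symm⟩
end
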